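/- arXiv:2002.10704 — 3 statements merged into one kernel-verified Lean document; each statement's English description precedes it below -/
import Mathlib

section
/- Let f = (f_1,…,f_n) be normalized monotone valuations on a finite item set M and let A be a Lorenz dominating allocation for f. Then: (i) A maximizes the welfare Σ_i f_i(A_i) over all allocations; (ii) A is lex-min, i.e., its sorted utility vector is maximal among all allocations in the lexicographic order that compares entries from smallest to largest; (iii) among all welfare-maximizing allocations, A minimizes Σ_i (f_i(A_i))²; and (iv) A maximizes the Nash social welfare Π_i f_i(A_i) over all allocations. -/
open Finset
open scoped Classical

variable {n : ℕ} {I : Type*} [DecidableEq I] [Fintype I]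

/-- An allocation assigns pairwise disjoint bundles of items to the agents
(items may remain unallocated). -/
def IsAllocation (A : Fin n → Finset I) : Prop :=
  ∀ i j : Fin n, i ≠ j → Disjoint (A i) (A j)

/-- The vector of utilities of an allocation under a profile of valuations. -/
def util {α : Type*} (f : Fin n → Finset I → α) (A : Fin n → Finset I) : Fin n → α :=
  fun i => f i (A i)

/-- The entries of the vector `u`, sorted in nondecreasing order. -/
noncomputable def sortedVec {α : Type*} [LinearOrder α] (u : Fin n → α) : List α :=
  (Finset.univ.val.map u).sort (· ≤ ·)

/-- `u` Lorenz-dominates `v`: for each `k`, the sum of the `k` smallest entries of `u`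
is at least the sum of the `k` smallest entries of `v`. -/
def LorenzGE {α : Type*} [LinearOrder α] [AddCommMonoid α] (u v : Fin n → α) : Prop :=
  ∀ k : ℕ, ((sortedVec v).take k).sum ≤ ((sortedVec u).take k).sum

/-- A matroid rank function: a normalized submodular valuation with dichotomous marginals. -/
structure IsMRF (f : Finset I → ℕ) : Prop where
  empty : f ∅ = 0
  submod : ∀ S T : Finset I, S ⊆ T → ∀ a : I,
      f (insert a T) + f S ≤ f (insert a S) + f T
  dichot : ∀ (S : Finset I) (a : I), f (insert a S) = f S ∨ f (insert a S) = f S + 1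

/-- Non-redundancy: removing any item from any agent's bundle strictly decreases its value. -/
def NonRedundant (f : Fin n → Finset I → ℕ) (A : Fin n → Finset I) : Prop :=
  ∀ i : Fin n, ∀ a ∈ A i, f i ((A i).erase a) < f i (A i)

/-- A Lorenz dominating allocation. -/
def LorenzDominating (f : Fin n → Finset I → ℕ) (A : Fin n → Finset I) : Prop :=
  ∀ B : Fin n → Finset I, IsAllocation B → LorenzGE (util f A) (util f B)

/-- The σ-perturbed utilities: agent `i` gets `f i (A i) + σ(i)/n²`, where the priority
`σ(i)` ranges over `{1,…,n}`. -/
noncomputable def pUtil (σ : Equiv.Perm (Fin n)) (f : Fin n → Finset I → ℕ)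
    (A : Fin n → Finset I) : Fin n → ℝ :=
  fun i => (f i (A i) : ℝ) + (((σ i : ℕ) : ℝ) + 1) / (n : ℝ) ^ 2

/-- A σ-Lorenz dominating allocation. -/
def SigmaLorenzDom (σ : Equiv.Perm (Fin n)) (f : Fin n → Finset I → ℕ)
    (A : Fin n → Finset I) : Prop :=
  ∀ B : Fin n → Finset I, IsAllocation B → LorenzGE (pUtil σ f A) (pUtil σ f B)

/-- Restriction of a valuation to a subset `D` of the items. -/
def restrictVal (f : Finset I → ℕ) (D : Finset I) : Finset I → ℕ := fun S => f (S ∩ D)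

/-- A partition of all the items into `n` (possibly empty) bundles. -/
def IsPartition (P : Fin n → Finset I) : Prop :=
  (∀ i j : Fin n, i ≠ j → Disjoint (P i) (P j)) ∧ ∀ a : I, ∃ j, a ∈ P j

/-- An XOS valuation: the pointwise maximum of a finite nonempty family of
nonnegative additive valuations. -/
def IsXOS (f : Finset I → ℝ) : Prop :=
  ∃ (k : ℕ) (w : Fin (k + 1) → I → ℝ),
    (∀ t a, 0 ≤ w t a) ∧
    ∀ S : Finset I, f S = Finset.univ.sup' Finset.univ_nonempty (fun t => ∑ a ∈ S, w t a)

/-- A dichotomous valuation (real-valued version). -/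
def IsDichotomousR (f : Finset I → ℝ) : Prop :=
  ∀ (S : Finset I) (a : I), f (insert a S) = f S ∨ f (insert a S) = f S + 1

/-- Envy-freeness up to one good. -/
def EF1 (f : Fin n → Finset I → ℝ) (A : Fin n → Finset I) : Prop :=
  ∀ i j : Fin n, f i (A j) ≤ f i (A i) ∨ ∃ e ∈ A j, f i ((A j).erase e) ≤ f i (A i)

/-- The maximum welfare attainable by a set `S` of agents. -/
noncomputable def maxWelfare (f : Fin n → Finset I → ℕ) (S : Finset (Fin n)) : ℕ :=
  Finset.sup (Finset.univ.filter fun B : Fin n → Finset I => IsAllocation B)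
    (fun B => ∑ j ∈ S, f j (B j))

/-- An allocation extended with index `none` for the set of unallocated items. -/
def extAlloc (A : Fin n → Finset I) : Option (Fin n) → Finset I
  | none => Finset.univ \ Finset.univ.biUnion A
  | some i => A i

/-!
Abel summation turns the prefix-sum inequalities that define Lorenz domination into
`0 ≤ ∑ j, c j * (x j - y j)` for nonincreasing nonnegative weights `c`, where `x` and `y` are the
two sorted vectors. For a nondecreasing concave function the secant slopes between `y j` and `x j`
are such weights, so a Lorenz dominating vector maximizes `∑ i, φ (u i)` for every such `φ`
(Karamata, Tomić, Weyl). When the totals agree the sign of the slopes is immaterial, and concavity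
alone suffices. The Nash welfare is the case `φ = log`, the sum of squares the case `φ x = -x ^ 2`.
-/

theorem sortedVec_eq_ofFn {α : Type*} [LinearOrder α] (u : Fin n → α) :
    sortedVec u = List.ofFn (u ∘ Tuple.sort u) := by
  have hperm : (sortedVec u).Perm (List.ofFn (u ∘ Tuple.sort u)) := by
    rw [← Multiset.coe_eq_coe, sortedVec, Multiset.sort_eq,
      Multiset.coe_eq_coe.2 (Equiv.Perm.ofFn_comp_perm _ u), Fin.univ_val_map]
  exact hperm.eq_of_pairwise' (Multiset.pairwise_sort _ _)
    (Tuple.monotone_sort u).sortedLE_ofFn.pairwise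

theorem eq_or_lex_of_sum_take_le {α : Type*} [LinearOrder α] [AddCommMonoid α]
    [AddLeftReflectLE α] {a b : List α} (hlen : b.length = a.length)
    (h : ∀ k : ℕ, (b.take k).sum ≤ (a.take k).sum) : b = a ∨ List.Lex (· < ·) b a := by
  induction b generalizing a with
  | nil => exact Or.inl (List.length_eq_zero_iff.1 hlen.symm).symm
  | cons y b ih =>
    cases a with
    | nil => simp at hlen
    | cons x a =>
      have hhead : y ≤ x := by simpa using h 1
      rcases hhead.lt_or_eq with hlt | rfl
      · exact Or.inr (List.Lex.rel hlt)
      · have htail (k : ℕ) : (b.take k).sum ≤ (a.take k).sum :=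
          le_of_add_le_add_left (by simpa using h (k + 1))
        rcases ih (Nat.succ_injective hlen) htail with rfl | hlex
        · exact Or.inl rfl
        · exact Or.inr (List.Lex.cons hlex)

theorem mul_sum_le_sum_mul_of_antitoneOn {ι R : Type*} [LinearOrder ι] [Semiring R]
    [PartialOrder R] [IsOrderedRing R] {t : Finset ι} {c d : ι → R} {C : R}
    (hc : AntitoneOn c t) (hC : ∀ j ∈ t, C ≤ c j) (hd : ∀ k ∈ t, 0 ≤ ∑ j ∈ t with j ≤ k, d j) :
    C * ∑ j ∈ t, d j ≤ ∑ j ∈ t, c j * d j := by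
  induction t using Finset.induction_on_max generalizing C with
  | empty => simp
  | insert m t hm ih =>
    have hmt : m ∉ t := fun h => (hm m h).false
    have hmem : m ∈ insert m t := mem_insert_self m t
    have hsub : t ⊆ insert m t := subset_insert m t
    have hprefix : ∀ k ∈ t, 0 ≤ ∑ j ∈ t with j ≤ k, d j := fun k hk => by
      simpa only [filter_insert, if_neg (hm k hk).not_ge] using hd k (hsub hk)
    have hlast : ∀ j ∈ t, c m ≤ c j := fun j hj => hc (hsub hj) hmem (hm j hj).le
    have htotal : 0 ≤ ∑ j ∈ insert m t, d j := by
      have hall : ∀ j ∈ insert m t, j ≤ m := by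
        simpa only [forall_mem_insert, le_refl, true_and] using fun j hj => (hm j hj).le
      simpa only [filter_true_of_mem hall] using hd m hmem
    calc C * ∑ j ∈ insert m t, d j
        ≤ c m * ∑ j ∈ insert m t, d j := mul_le_mul_of_nonneg_right (hC m hmem) htotal
      _ = c m * d m + c m * ∑ j ∈ t, d j := by rw [sum_insert hmt, mul_add]
      _ ≤ c m * d m + ∑ j ∈ t, c j * d j := by
          gcongr
          exact ih (hc.mono (coe_subset.2 hsub)) hlast hprefix
      _ = ∑ j ∈ insert m t, c j * d j := by rw [sum_insert hmt]

section Karamata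

variable {𝕜 : Type*} [Field 𝕜] [LinearOrder 𝕜] [IsStrictOrderedRing 𝕜] {s : Set 𝕜} {φ : 𝕜 → 𝕜}

theorem slope_le_slope_of_concaveOn (hφ : ConcaveOn 𝕜 s φ) {x y x' y' : 𝕜}
    (hx : x ∈ s) (hy : y ∈ s) (hx' : x' ∈ s) (hy' : y' ∈ s) (hxx' : x ≤ x') (hyy' : y ≤ y')
    (hxy : x ≠ y) (hxy' : x' ≠ y') : slope φ y' x' ≤ slope φ y x := by
  by_cases hmid : x' = y
  · subst hmid
    have hxy_lt : x < x' := hxx'.lt_of_ne hxy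
    have hx_lt : x < y' := hxy_lt.trans_le hyy'
    calc slope φ y' x'
        ≤ slope φ y' x := hφ.slope_anti hy' ⟨hx, hx_lt.ne⟩ ⟨hx', hxy'⟩ hxx'
      _ = slope φ x y' := slope_comm φ y' x
      _ ≤ slope φ x x' := hφ.slope_anti hx ⟨hy, hxy.symm⟩ ⟨hy', hx_lt.ne'⟩ hyy'
      _ = slope φ x' x := slope_comm φ x x'
  · calc slope φ y' x'
        = slope φ x' y' := slope_comm φ y' x'
      _ ≤ slope φ x' y := hφ.slope_anti hx' ⟨hy, Ne.symm hmid⟩ ⟨hy', hxy'.symm⟩ hyy'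
      _ = slope φ y x' := slope_comm φ x' y
      _ ≤ slope φ y x := hφ.slope_anti hy ⟨hx, hxy⟩ ⟨hx', hmid⟩ hxx'

theorem mul_sum_sub_le_sum_comp_sub_of_concaveOn {ι : Type*} [LinearOrder ι] [Fintype ι]
    {x y : ι → 𝕜} {C : 𝕜} (hφ : ConcaveOn 𝕜 s φ) (hx : Monotone x) (hy : Monotone y)
    (hxs : ∀ j, x j ∈ s) (hys : ∀ j, y j ∈ s) (hC : ∀ j, x j ≠ y j → C ≤ slope φ (y j) (x j))
    (hxy : ∀ k, ∑ j with j ≤ k, y j ≤ ∑ j with j ≤ k, x j) :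
    C * ∑ j, (x j - y j) ≤ ∑ j, (φ (x j) - φ (y j)) := by
  -- At indices with `x j = y j` the junk value `slope φ (y j) (y j) = 0` would break antitonicity.
  let t : Finset ι := {j | x j ≠ y j}
  have hne {j : ι} (hj : j ∈ t) : x j ≠ y j := (mem_filter.1 hj).2
  have hanti : AntitoneOn (fun j => slope φ (y j) (x j)) t := fun i hi j hj hij =>
    slope_le_slope_of_concaveOn hφ (hxs i) (hys i) (hxs j) (hys j) (hx hij) (hy hij)
      (hne hi) (hne hj)
  have hprefix : ∀ k ∈ t, 0 ≤ ∑ j ∈ t with j ≤ k, (x j - y j) := fun k _ => by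
    rw [filter_comm, sum_filter_of_ne fun j _ => sub_ne_zero.1, sum_sub_distrib]
    exact sub_nonneg.2 (hxy k)
  calc C * ∑ j, (x j - y j)
      = C * ∑ j ∈ t, (x j - y j) := by rw [sum_filter_of_ne fun j _ => sub_ne_zero.1]
    _ ≤ ∑ j ∈ t, slope φ (y j) (x j) * (x j - y j) :=
        mul_sum_le_sum_mul_of_antitoneOn hanti (fun j hj => hC j (hne hj)) hprefix
    _ = ∑ j ∈ t, (φ (x j) - φ (y j)) := sum_congr rfl fun j _ => by
        rw [mul_comm, ← smul_eq_mul, sub_smul_slope, vsub_eq_sub]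
    _ = ∑ j, (φ (x j) - φ (y j)) :=
        sum_filter_of_ne fun j _ => mt fun h => by rw [h, sub_self]

end Karamata

namespace LorenzGE

section AddCommMonoid

variable {α : Type*} [LinearOrder α] [AddCommMonoid α] {u v : Fin n → α}

theorem sum_le (h : LorenzGE u v) : ∑ i, v i ≤ ∑ i, u i := by
  simpa [sortedVec_eq_ofFn, List.take_of_length_le, List.sum_ofFn, Equiv.sum_comp] using h n

theorem sum_sort_le (h : LorenzGE u v) (k : Fin n) :
    ∑ j with j ≤ k, v (Tuple.sort v j) ≤ ∑ j with j ≤ k, u (Tuple.sort u j) := by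
  simpa only [sortedVec_eq_ofFn, List.sum_take_ofFn, Nat.lt_succ_iff, Fin.val_fin_le,
    Function.comp_apply] using h (k + 1)

theorem exists_le (h : LorenzGE u v) (i : Fin n) : ∃ j, v j ≤ u i := by
  have : NeZero n := ⟨i.pos.ne'⟩
  refine ⟨Tuple.sort v 0, ?_⟩
  calc v (Tuple.sort v 0)
      ≤ u (Tuple.sort u 0) := by simpa [filter_eq'] using h.sum_sort_le 0
    _ ≤ u (Tuple.sort u ((Tuple.sort u).symm i)) := Tuple.monotone_sort u (Fin.zero_le _)
    _ = u i := by rw [Equiv.apply_symm_apply]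

theorem sortedVec_eq_or_lex [AddLeftReflectLE α] (h : LorenzGE u v) :
    sortedVec v = sortedVec u ∨ List.Lex (· < ·) (sortedVec v) (sortedVec u) :=
  eq_or_lex_of_sum_take_le (by simp only [sortedVec_eq_ofFn, List.length_ofFn]) h

end AddCommMonoid

section Field

variable {𝕜 : Type*} [Field 𝕜] [LinearOrder 𝕜] [IsStrictOrderedRing 𝕜] {s : Set 𝕜} {φ : 𝕜 → 𝕜}
  {u v : Fin n → 𝕜}

theorem mul_sum_sub_le_sum_comp_sub (h : LorenzGE u v) {C : 𝕜} (hφ : ConcaveOn 𝕜 s φ)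
    (hu : ∀ i, u i ∈ s) (hv : ∀ i, v i ∈ s) (hC : ∀ i j, C ≤ slope φ (v j) (u i)) :
    C * (∑ i, u i - ∑ i, v i) ≤ ∑ i, φ (u i) - ∑ i, φ (v i) := by
  have hsorted := mul_sum_sub_le_sum_comp_sub_of_concaveOn hφ (Tuple.monotone_sort u)
    (Tuple.monotone_sort v) (fun _ => hu _) (fun _ => hv _) (fun _ _ => hC _ _) h.sum_sort_le
  simp only [Function.comp_apply, sum_sub_distrib] at hsorted
  rwa [Equiv.sum_comp, Equiv.sum_comp, Equiv.sum_comp (Tuple.sort u) fun i => φ (u i),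
    Equiv.sum_comp (Tuple.sort v) fun i => φ (v i)] at hsorted

theorem sum_comp_le_of_monotoneOn_of_concaveOn (h : LorenzGE u v) (hmono : MonotoneOn φ s)
    (hφ : ConcaveOn 𝕜 s φ) (hu : ∀ i, u i ∈ s) (hv : ∀ i, v i ∈ s) :
    ∑ i, φ (v i) ≤ ∑ i, φ (u i) := by
  simpa using h.mul_sum_sub_le_sum_comp_sub hφ hu hv fun i j => hmono.slope_nonneg (hv j) (hu i)

theorem sum_comp_le_of_concaveOn (h : LorenzGE u v) (hsum : ∑ i, u i = ∑ i, v i)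
    (hφ : ConcaveOn 𝕜 s φ) (hu : ∀ i, u i ∈ s) (hv : ∀ i, v i ∈ s) :
    ∑ i, φ (v i) ≤ ∑ i, φ (u i) := by
  obtain ⟨C, hC⟩ := (Set.finite_range fun p : Fin n × Fin n => slope φ (v p.2) (u p.1)).bddBelow
  simpa [hsum] using
    h.mul_sum_sub_le_sum_comp_sub hφ hu hv fun i j => hC (Set.mem_range_self (i, j))

theorem sum_sq_le (h : LorenzGE u v) (hsum : ∑ i, u i = ∑ i, v i) :
    ∑ i, u i ^ 2 ≤ ∑ i, v i ^ 2 := by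
  simpa using h.sum_comp_le_of_concaveOn hsum even_two.convexOn_pow.neg
    (fun i => Set.mem_univ (u i)) (fun i => Set.mem_univ (v i))

end Field

section Real

variable {u v : Fin n → ℝ}

theorem prod_le_of_pos (h : LorenzGE u v) (hv : ∀ i, 0 < v i) : ∏ i, v i ≤ ∏ i, u i := by
  have hu (i : Fin n) : 0 < u i := let ⟨j, hj⟩ := h.exists_le i; (hv j).trans_le hj
  rw [← Real.log_le_log_iff (prod_pos fun i _ => hv i) (prod_pos fun i _ => hu i),
    Real.log_prod fun i _ => (hv i).ne', Real.log_prod fun i _ => (hu i).ne']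
  exact h.sum_comp_le_of_monotoneOn_of_concaveOn Real.strictMonoOn_log.monotoneOn
    strictConcaveOn_log_Ioi.concaveOn hu hv

theorem prod_le (h : LorenzGE u v) (hv : ∀ i, 0 ≤ v i) : ∏ i, v i ≤ ∏ i, u i := by
  by_cases hzero : ∃ i, v i = 0
  · obtain ⟨i, hi⟩ := hzero
    have hu (i : Fin n) : 0 ≤ u i := let ⟨j, hj⟩ := h.exists_le i; (hv j).trans hj
    rw [prod_eq_zero (mem_univ i) hi]
    exact prod_nonneg fun i _ => hu i
  · exact h.prod_le_of_pos fun i => (hv i).lt_of_ne' (not_exists.1 hzero i)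

end Real

end LorenzGE

theorem lorenz_dominating_is_good_general {n : ℕ} {X : Type*} (feasible : Set X)
    (u : X → Fin n → ℝ) (hnonneg : ∀ x ∈ feasible, ∀ i, 0 ≤ u x i)
    {a : X} (ha : a ∈ feasible) (hLD : ∀ x ∈ feasible, LorenzGE (u a) (u x)) :
    (∀ x ∈ feasible, ∑ i, u x i ≤ ∑ i, u a i) ∧
    (∀ x ∈ feasible, sortedVec (u x) = sortedVec (u a) ∨
      List.Lex (· < ·) (sortedVec (u x)) (sortedVec (u a))) ∧
    (∀ x ∈ feasible, (∀ y ∈ feasible, ∑ i, u y i ≤ ∑ i, u x i) →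
      ∑ i, u a i ^ 2 ≤ ∑ i, u x i ^ 2) ∧
    (∀ x ∈ feasible, ∏ i, u x i ≤ ∏ i, u a i) :=
  ⟨fun x hx => (hLD x hx).sum_le,
    fun x hx => (hLD x hx).sortedVec_eq_or_lex,
    fun x hx hmax => (hLD x hx).sum_sq_le ((hmax a ha).antisymm (hLD x hx).sum_le),
    fun x hx => (hLD x hx).prod_le (hnonneg x hx)⟩

/-- Proposition: a Lorenz dominating allocation for normalized monotone valuations
maximizes welfare, is lex-min, is min-square, and maximizes Nash social welfare. -/
theorem lorenz_dominating_is_good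
    {n : ℕ} {I : Type*} [DecidableEq I] [Fintype I]
    (f : Fin n → Finset I → ℝ)
    (hnorm : ∀ i, f i ∅ = 0)
    (hmono : ∀ i, ∀ S T : Finset I, S ⊆ T → f i S ≤ f i T)
    (A : Fin n → Finset I) (hA : IsAllocation A)
    (hLD : ∀ B : Fin n → Finset I, IsAllocation B → LorenzGE (util f A) (util f B)) :
    -- (i) A maximizes welfare
    (∀ B : Fin n → Finset I, IsAllocation B → ∑ i, f i (B i) ≤ ∑ i, f i (A i)) ∧
    -- (ii) A is lex-min: its sorted utility vector is lexicographically maximal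
    (∀ B : Fin n → Finset I, IsAllocation B →
      sortedVec (util f B) = sortedVec (util f A) ∨
      List.Lex (· < ·) (sortedVec (util f B)) (sortedVec (util f A))) ∧
    -- (iii) among welfare-maximizing allocations, A minimizes the sum of squared utilities
    (∀ B : Fin n → Finset I, IsAllocation B →
      (∀ C : Fin n → Finset I, IsAllocation C → ∑ i, f i (C i) ≤ ∑ i, f i (B i)) →
      ∑ i, (f i (A i)) ^ 2 ≤ ∑ i, (f i (B i)) ^ 2) ∧
    -- (iv) A maximizes Nash social welfare
    (∀ B : Fin n → Finset I, IsAllocation B → ∏ i, f i (B i) ≤ ∏ i, f i (A i)) :=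
  lorenz_dominating_is_good_general {B | IsAllocation B} (util f)
    (fun B _ i => (hnorm i).symm.trans_le (hmono i ∅ (B i) (empty_subset _))) hA hLD
end

section
/- Let f_1,…,f_n be MRF (submodular dichotomous) valuations on a finite item set M and let A be a non-redundant Lorenz dominating allocation. Then A is EFX: for all agents i, j and every item e ∈ A_j, f_i(A_i) ≥ f_i(A_j \ {e}). -/
open Finset
open scoped Classical

variable {n : ℕ} {I : Type*} [DecidableEq I] [Fintype I]

/-!
Suppose agent `i` envies `A j \ {e}`. By matroid augmentation some item `a` of `A j \ {e}` raises
the value of `A i`, so hand `a` over to `i`. By non-redundancy `A j` is independent for `j`, so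
what is left of it is worth at least as much to `j` as `A j \ {e}` is to `i`. Both `i` and `j` then
lie above the old utility of `i` and nobody else has lost anything. The utilities truncated at the
smaller of the two new levels have therefore grown in total. But a Lorenz dominating vector
maximizes the sum of its entries truncated at any level `t`, as that sum is the minimum over `k` of
the sum of its `k` smallest entries plus `(n - k) • t`.
-/

section LorenzDominance

variable {α : Type*} [LinearOrder α]

theorem length_sortedVec (u : Fin n → α) : (sortedVec u).length = n := by
  simp [sortedVec]

theorem sum_map_sortedVec {β : Type*} [AddCommMonoid β] (u : Fin n → α) (g : α → β) :
    ((sortedVec u).map g).sum = ∑ i, g (u i) := by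
  rw [← Multiset.sum_coe, ← Multiset.map_coe, sortedVec, Multiset.sort_eq, Multiset.map_map]
  rfl

variable [AddCommMonoid α]

theorem sum_map_min_le_sum_take_add_nsmul [IsOrderedAddMonoid α] (t : α) (l : List α) (k : ℕ) :
    (l.map (min t)).sum ≤ (l.take k).sum + (l.length - k) • t := by
  have htake : ((l.take k).map (min t)).sum ≤ (l.take k).sum := by
    simpa only [List.map_id] using
      List.sum_le_sum (l := l.take k) (g := id) fun x _ => min_le_right t x
  have hdrop : ((l.drop k).map (min t)).sum ≤ (l.length - k) • t := by
    simpa only [List.map_const', List.sum_replicate, List.length_drop] using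
      List.sum_le_sum (l := l.drop k) (g := fun _ => t) fun x _ => min_le_left t x
  calc (l.map (min t)).sum
      = ((l.take k).map (min t)).sum + ((l.drop k).map (min t)).sum := by
        rw [← List.sum_append, ← List.map_append, List.take_append_drop]
    _ ≤ (l.take k).sum + (l.length - k) • t := add_le_add htake hdrop

theorem exists_sum_map_min_eq_sum_take_add_nsmul (t : α) {l : List α} (hl : l.Pairwise (· ≤ ·)) :
    ∃ k, (l.map (min t)).sum = (l.take k).sum + (l.length - k) • t := by
  induction l with
  | nil => exact ⟨0, by simp⟩
  | cons x l ih =>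
    obtain ⟨hxl, hl⟩ := List.pairwise_cons.1 hl
    rcases le_total x t with hxt | htx
    · obtain ⟨k, hk⟩ := ih hl
      exact ⟨k + 1, by simp [hk, hxt, add_assoc]⟩
    · have htruncated : ∀ y ∈ x :: l, min t y = t :=
        List.forall_mem_cons.2 ⟨min_eq_left htx, fun y hy => min_eq_left (htx.trans (hxl y hy))⟩
      exact ⟨0, by simp [List.map_congr_left htruncated, succ_nsmul']⟩

theorem LorenzGE.sum_min_le [IsOrderedAddMonoid α] {u v : Fin n → α} (h : LorenzGE u v) (t : α) :
    ∑ i, min t (v i) ≤ ∑ i, min t (u i) := by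
  obtain ⟨k, hk⟩ := exists_sum_map_min_eq_sum_take_add_nsmul t
    (l := sortedVec u) (Multiset.pairwise_sort _ _)
  calc ∑ i, min t (v i)
      = ((sortedVec v).map (min t)).sum := (sum_map_sortedVec v _).symm
    _ ≤ ((sortedVec v).take k).sum + (n - k) • t := by
        simpa only [length_sortedVec] using sum_map_min_le_sum_take_add_nsmul t (sortedVec v) k
    _ ≤ ((sortedVec u).take k).sum + (n - k) • t := add_le_add_left (h k) _
    _ = ((sortedVec u).map (min t)).sum := by rw [hk, length_sortedVec]
    _ = ∑ i, min t (u i) := sum_map_sortedVec u _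

/-- The Pigou–Dalton principle, with `j` allowed to drop to any level above the old one of `i`. -/
theorem not_lorenzGE_of_lt_of_lt_of_forall_ne_le [IsOrderedCancelAddMonoid α] {u v : Fin n → α}
    {i j : Fin n} (hi : u i < v i) (hj : u i < v j) (h : ∀ k ≠ j, u k ≤ v k) :
    ¬LorenzGE u v := by
  intro huv
  refine (huv.sum_min_le (min (v i) (v j))).not_gt
    (sum_lt_sum (fun k _ => ?_) ⟨i, mem_univ i, ?_⟩)
  · rcases eq_or_ne k j with rfl | hk
    · exact (min_le_left _ _).trans_eq (min_eq_left (min_le_right _ _)).symm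
    · exact min_le_min_left _ (h k hk)
  · calc min (min (v i) (v j)) (u i)
        ≤ u i := min_le_right _ _
      _ < min (v i) (v j) := lt_min hi hj
      _ = min (min (v i) (v j)) (v i) := (min_eq_left (min_le_left _ _)).symm

end LorenzDominance

namespace IsMRF

variable {E : Type*} [DecidableEq E] {f : Finset E → ℕ}

theorem monotone (hf : IsMRF f) : Monotone f :=
  monotone_iff_forall_le_insert.2 fun S a _ => by
    rcases hf.dichot S a with h | h <;> omega

theorem le_card (hf : IsMRF f) (S : Finset E) : f S ≤ #S := by
  induction S using Finset.induction_on with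
  | empty => exact hf.empty.le
  | insert a S ha ih =>
    rw [card_insert_of_notMem ha]
    rcases hf.dichot S a with h | h <;> omega

theorem union_eq_of_forall_insert_eq (hf : IsMRF f) {S T : Finset E}
    (h : ∀ a ∈ T, f (insert a S) = f S) : f (T ∪ S) = f S := by
  induction T using Finset.induction_on with
  | empty => rw [empty_union]
  | insert a T _ ih =>
    obtain ⟨ha, hT⟩ := (forall_mem_insert _ _ _).1 h
    have hsubmod := hf.submod S (T ∪ S) subset_union_right a
    have hmono := hf.monotone (subset_insert a (T ∪ S))
    have hTS := ih hT
    rw [insert_union]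
    omega

theorem exists_insert_eq_add_one (hf : IsMRF f) {S T : Finset E} (h : f S < f T) :
    ∃ a ∈ T, f (insert a S) = f S + 1 := by
  by_contra! hne
  have hspan : f (T ∪ S) = f S := hf.union_eq_of_forall_insert_eq fun a ha =>
    (hf.dichot S a).resolve_right (hne a ha)
  exact h.not_ge ((hf.monotone subset_union_left).trans_eq hspan)

theorem eq_card_of_subset_of_forall_erase_lt (hf : IsMRF f) {S T : Finset E}
    (hS : ∀ a ∈ S, f (S.erase a) < f S) (hTS : T ⊆ S) : f T = #T := by
  induction T using Finset.induction_on with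
  | empty => exact hf.empty
  | insert a T ha ih =>
    obtain ⟨haS, hT⟩ := insert_subset_iff.1 hTS
    have hsubmod := hf.submod T (S.erase a) (subset_erase.2 ⟨hT, ha⟩) a
    rw [insert_erase haS] at hsubmod
    have hcritical := hS a haS
    have hcard := ih hT
    have hdichot := hf.dichot T a
    rw [card_insert_of_notMem ha]
    omega

end IsMRF

section Reassign

variable {E : Type*} [DecidableEq E]

/-- The reassignment of item `a` to agent `i`: it is added to the bundle of `i` and removed from
every other bundle, so that its previous owner, if any, need not be named. -/
def reassign (A : Fin n → Finset E) (a : E) (i : Fin n) : Fin n → Finset E :=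
  Function.update (fun k => (A k).erase a) i (insert a (A i))

variable {A : Fin n → Finset E}

theorem reassign_self (A : Fin n → Finset E) (a : E) (i : Fin n) :
    reassign A a i i = insert a (A i) :=
  Function.update_self ..

theorem reassign_of_ne {i k : Fin n} (hk : k ≠ i) (A : Fin n → Finset E) (a : E) :
    reassign A a i k = (A k).erase a :=
  Function.update_of_ne hk ..

theorem isAllocation_reassign (hA : IsAllocation A) (a : E) (i : Fin n) :
    IsAllocation (reassign A a i) := by
  intro k l hkl
  have hdisj := hA k l hkl
  rcases eq_or_ne k i with rfl | hk
  · rw [reassign_self, reassign_of_ne hkl.symm, disjoint_insert_left]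
    exact ⟨notMem_erase a _, hdisj.mono_right (erase_subset a _)⟩
  rcases eq_or_ne l i with rfl | hl
  · rw [reassign_self, reassign_of_ne hk, disjoint_insert_right]
    exact ⟨notMem_erase a _, hdisj.mono_left (erase_subset a _)⟩
  · rw [reassign_of_ne hk, reassign_of_ne hl]
    exact hdisj.mono (erase_subset a _) (erase_subset a _)

theorem subset_reassign (hA : IsAllocation A) {a : E} {j k : Fin n} (ha : a ∈ A j)
    (hk : k ≠ j) (i : Fin n) : A k ⊆ reassign A a i k := by
  rcases eq_or_ne k i with rfl | hki
  · rw [reassign_self]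
    exact subset_insert a _
  · rw [reassign_of_ne hki, erase_eq_of_notMem (disjoint_right.1 (hA k j hk) ha)]

end Reassign

theorem lorenz_dominating_nonredundant_is_EFX_general {E : Type*} [DecidableEq E]
    (f : Fin n → Finset E → ℕ) (hf : ∀ i, IsMRF (f i)) (A : Fin n → Finset E)
    (hA : IsAllocation A) (hNR : NonRedundant f A) (hLD : LorenzDominating f A) :
    ∀ i j : Fin n, ∀ e ∈ A j, f i ((A j).erase e) ≤ f i (A i) := by
  intro i j e he
  by_contra! hlt
  obtain ⟨a, ha, hia⟩ := (hf i).exists_insert_eq_add_one hlt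
  have haj : a ∈ A j := mem_of_mem_erase ha
  have hji : j ≠ i := by
    rintro rfl
    simp [insert_eq_of_mem haj] at hia
  have hj : f i (A i) < f j ((A j).erase a) := calc
    f i (A i) < f i ((A j).erase e) := hlt
    _ ≤ #((A j).erase e) := (hf i).le_card _
    _ = #((A j).erase a) := by rw [card_erase_of_mem he, card_erase_of_mem haj]
    _ = f j ((A j).erase a) :=
      ((hf j).eq_card_of_subset_of_forall_erase_lt (hNR j) (erase_subset a _)).symm
  refine not_lorenzGE_of_lt_of_lt_of_forall_ne_le (i := i) (j := j) ?_ ?_ (fun k hk => ?_)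
    (hLD _ (isAllocation_reassign hA a i))
  · simp only [util, reassign_self, hia, Nat.lt_succ_self]
  · simpa only [util, reassign_of_ne hji] using hj
  · exact (hf k).monotone (subset_reassign hA haj hk i)

/-- A non-redundant Lorenz dominating allocation for MRF (submodular dichotomous)
valuations is EFX. -/
theorem lorenz_dominating_nonredundant_is_EFX
    {n : ℕ} {I : Type*} [DecidableEq I] [Fintype I]
    (f : Fin n → Finset I → ℕ) (hf : ∀ i, IsMRF (f i))
    (A : Fin n → Finset I) (hA : IsAllocation A)
    (hNR : NonRedundant f A)
    (hLD : LorenzDominating f A) :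
    ∀ i j : Fin n, ∀ e ∈ A j, f i ((A j).erase e) ≤ f i (A i) :=
  lorenz_dominating_nonredundant_is_EFX_general f hf A hA hNR hLD
end

section
/- (Faithfulness.) Fix a priority order σ and MRF valuations f_1,…,f_n on a finite item set M. Let A be a non-redundant σ-Lorenz dominating allocation for the profile (f_1,…,f_n), and fix an agent i. Then every non-redundant σ-Lorenz dominating allocation A' for the profile in which f_i is replaced by the restricted valuation f_{i|A_i} (and all other valuations are unchanged) satisfies A'_i = A_i. -/
open Finset
open scoped Classical

variable {n : ℕ} {I : Type*} [DecidableEq I] [Fintype I]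

/-!
The perturbations `σ(i)/n²` are distinct and differ by less than `1`, so a perturbed utility
determines its agent. Two σ-Lorenz dominating allocations of one profile have the same perturbed
utilities up to order, hence give every agent the same value. When agent `i` restricts her report to
`A i`, the utilities under `A` are unchanged, while those under any other allocation are attained
with the old reports after discarding items; so `A` stays σ-Lorenz dominating, and
`f i (A' i ∩ A i) = f i (A i)`. Non-redundancy of `A'` gives `A' i ⊆ A i`, and non-redundancy of `A`
excludes a proper inclusion.
-/

theorem mem_sortedVec {α : Type*} [LinearOrder α] {u : Fin n → α} {a : α} :
    a ∈ sortedVec u ↔ a ∈ Set.range u := by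
  simp [sortedVec]

theorem LorenzGE.sortedVec_eq {α : Type*} [LinearOrder α] [AddCancelCommMonoid α]
    {u v : Fin n → α} (huv : LorenzGE u v) (hvu : LorenzGE v u) : sortedVec u = sortedVec v :=
  List.eq_of_sum_take_eq (by simp [sortedVec]) fun k _ => le_antisymm (hvu k) (huv k)

theorem LorenzGE.range_eq {α : Type*} [LinearOrder α] [AddCancelCommMonoid α]
    {u v : Fin n → α} (huv : LorenzGE u v) (hvu : LorenzGE v u) : Set.range u = Set.range v := by
  ext a
  rw [← mem_sortedVec, huv.sortedVec_eq hvu, mem_sortedVec]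

section Items

variable {X : Type*} {σ : Equiv.Perm (Fin n)} {f g : Fin n → Finset X → ℕ}
  {A B : Fin n → Finset X} {i : Fin n}

theorem IsAllocation.mono (hA : IsAllocation A) (hBA : ∀ j, B j ⊆ A j) : IsAllocation B :=
  fun j k hjk => (hA j k hjk).mono (hBA j) (hBA k)

theorem eq_of_pUtil_eq {j : Fin n} (h : pUtil σ f A i = pUtil σ g B j) : i = j := by
  have hn : (n : ℝ) ≠ 0 := Nat.cast_ne_zero.2 i.pos.ne'
  have hlt (k : Fin n) : (σ k : ℕ) < n ^ 2 :=
    (σ k).isLt.trans_le (Nat.le_self_pow two_ne_zero n)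
  have hscaled : n ^ 2 * f i (A i) + σ i = n ^ 2 * g j (B j) + σ j := by
    simp only [pUtil] at h
    field_simp at h
    rify
    linarith
  have hmod := congrArg (· % n ^ 2) hscaled
  simp only [Nat.mul_add_mod, Nat.mod_eq_of_lt (hlt i), Nat.mod_eq_of_lt (hlt j)] at hmod
  exact σ.injective (Fin.ext hmod)

theorem SigmaLorenzDom.value_eq (hA : IsAllocation A) (hB : IsAllocation B)
    (hAdom : SigmaLorenzDom σ f A) (hBdom : SigmaLorenzDom σ f B) (i : Fin n) :
    f i (A i) = f i (B i) := by
  have hrange := LorenzGE.range_eq (hAdom B hB) (hBdom A hA)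
  obtain ⟨j, hj⟩ : pUtil σ f A i ∈ Set.range (pUtil σ f B) :=
    hrange ▸ Set.mem_range_self i
  obtain rfl := eq_of_pUtil_eq hj
  exact_mod_cast (add_right_cancel hj).symm

theorem SigmaLorenzDom.of_exists_subset (hA : SigmaLorenzDom σ f A)
    (hgA : ∀ j, g j (A j) = f j (A j)) (hgf : ∀ j S, ∃ T ⊆ S, g j S = f j T) :
    SigmaLorenzDom σ g A := by
  intro B hB
  choose C hCB hgB using fun j => hgf j (B j)
  have hA_util : pUtil σ g A = pUtil σ f A := funext fun j => by simp only [pUtil, hgA]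
  have hB_util : pUtil σ g B = pUtil σ f C := funext fun j => by simp only [pUtil, hgB]
  rw [hA_util, hB_util]
  exact hA C (hB.mono hCB)

variable [DecidableEq X] {v : Finset X → ℕ} {D S T : Finset X}

theorem IsMRF.monotone_s9 (hv : IsMRF v) : Monotone v := by
  refine monotone_iff_forall_le_insert.2 fun S a _ => ?_
  rcases hv.dichot S a with h | h <;> omega

/-- A bundle every item of which has positive marginal value: the condition that `NonRedundant`
imposes on each agent's bundle. For a matroid rank function these are the independent sets. -/
def Irredundant (v : Finset X → ℕ) (S : Finset X) : Prop :=
  ∀ a ∈ S, v (S.erase a) < v S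

theorem Irredundant.eq_of_subset_of_le (hT : Irredundant v T) (hv : Monotone v) (hST : S ⊆ T)
    (hle : v T ≤ v S) : S = T := by
  refine hST.antisymm fun a haT => by_contra fun haS => ?_
  have hSe : S ⊆ T.erase a := subset_erase.2 ⟨hST, haS⟩
  exact (hT a haT).not_ge (hle.trans (hv hSe))

theorem Irredundant.subset_of_restrictVal (hS : Irredundant (restrictVal v D) S) : S ⊆ D := by
  refine fun a haS => by_contra fun haD => (hS a haS).ne ?_
  have ha_inter : a ∉ S ∩ D := fun h => haD (mem_of_mem_inter_right h)
  simp only [restrictVal, erase_inter, erase_eq_of_notMem ha_inter]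

theorem SigmaLorenzDom.update_restrictVal (hA : SigmaLorenzDom σ f A) (hAD : A i ⊆ D) :
    SigmaLorenzDom σ (Function.update f i (restrictVal (f i) D)) A := by
  refine hA.of_exists_subset (fun j => ?_) (fun j S => ?_) <;> rcases eq_or_ne j i with rfl | hji
  · simp only [Function.update_self, restrictVal, inter_eq_left.2 hAD]
  · rw [Function.update_of_ne hji]
  · exact ⟨S ∩ D, inter_subset_left, by rw [Function.update_self, restrictVal]⟩
  · exact ⟨S, Subset.rfl, by rw [Function.update_of_ne hji]⟩

theorem PE_faithful_general {A' : Fin n → Finset X} (hmono : Monotone (f i))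
    (hA : IsAllocation A) (hirr : Irredundant (f i) (A i)) (hdom : SigmaLorenzDom σ f A)
    (hA' : IsAllocation A') (hirr' : Irredundant (restrictVal (f i) (A i)) (A' i))
    (hdom' : SigmaLorenzDom σ (Function.update f i (restrictVal (f i) (A i))) A') :
    A' i = A i := by
  have hsub : A' i ⊆ A i := hirr'.subset_of_restrictVal
  have hval := (hdom.update_restrictVal Subset.rfl).value_eq hA hA' hdom' i
  simp only [Function.update_self, restrictVal, inter_self, inter_eq_left.2 hsub] at hval
  exact hirr.eq_of_subset_of_le hmono hsub hval.le

end Items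

/-- Faithfulness of the prioritized egalitarian mechanism: if agent `i` replaces her
report by its restriction to the bundle `A i` she receives, then in every non-redundant
σ-Lorenz dominating allocation for the new profile she still receives `A i`. -/
theorem PE_faithful
    {n : ℕ} {I : Type*} [DecidableEq I] [Fintype I]
    (σ : Equiv.Perm (Fin n))
    (f : Fin n → Finset I → ℕ) (hf : ∀ i, IsMRF (f i))
    (A : Fin n → Finset I) (hA : IsAllocation A)
    (hNR : NonRedundant f A) (hLD : SigmaLorenzDom σ f A)
    (i : Fin n)
    (A' : Fin n → Finset I) (hA' : IsAllocation A')
    (hNR' : NonRedundant (Function.update f i (restrictVal (f i) (A i))) A')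
    (hLD' : SigmaLorenzDom σ (Function.update f i (restrictVal (f i) (A i))) A') :
    A' i = A i := by
  have hirr' := hNR' i
  rw [Function.update_self] at hirr'
  exact PE_faithful_general (hf i).monotone_s9 hA (hNR i) hLD hA' hirr' hLD'
end
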